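/- arXiv:2211.11023 — 3 statements merged into one kernel-verified Lean document; each statement's English description precedes it below -/
import Mathlib

section
/- Fix a prime power q and ε ∈ (0,1/2). There exist constants c, C > 0 (depending only on q and ε) and an integer N such that for all integers n ≥ N and all integers m with (3/4)·(log n)/(log q) ≤ m ≤ (2−ε)·(log n)/(log q), one has c·(min{n, q^m})²/(m·q^{m}) ≤ log G_q(x_q) ≤ C·(min{n, q^m})²/(m·q^{m}) · 1/(1 − x_q/q). -/
open Real

noncomputable section

/-- Predicate characterizing the Dickman function `ρ : [0,∞) → (0,∞)`:
continuous on `[0,∞)`, positive, equal to `1` on `[0,1]`, and satisfying the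
delay differential equation `t·ρ'(t) + ρ(t-1) = 0` for `t > 1`. -/
def IsDickman (ρ : ℝ → ℝ) : Prop :=
  ContinuousOn ρ (Set.Ici 0) ∧
  (∀ t : ℝ, 0 ≤ t → 0 < ρ t) ∧
  (∀ t ∈ Set.Icc (0:ℝ) 1, ρ t = 1) ∧
  (∀ t : ℝ, 1 < t → HasDerivAt ρ (-(ρ (t - 1)) / t) t)

/-- `ξ(u)`: for `u > 1`, the unique positive solution of `e^ξ = 1 + u·ξ`; otherwise `0`. -/
def xi (u : ℝ) : ℝ :=
  open Classical in
  if h : ∃ x : ℝ, 0 < x ∧ Real.exp x = 1 + u * x then h.choose else 0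

/-- `p_{n,m}`: probability that a uniformly random permutation of `{1,…,n}` is `m`-friable,
i.e. has no cycle of length greater than `m`. -/
def permProb (n m : ℕ) : ℝ :=
  (Nat.card {σ : Equiv.Perm (Fin n) // ∀ c ∈ σ.cycleType, c ≤ m} : ℝ) /
    (Nat.factorial n : ℝ)

/-- `p_{n,m,q}`: proportion of monic polynomials of degree `n` over a finite field `F`
(of cardinality `q`) that are `m`-friable, i.e. all of whose monic irreducible factors
have degree at most `m`. -/
def polyProb (F : Type) [Field F] [Fintype F] (n m : ℕ) : ℝ :=
  (Nat.card {f : Polynomial F // f.Monic ∧ f.natDegree = n ∧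
      ∀ p : Polynomial F, p.Monic → Irreducible p → p ∣ f → p.natDegree ≤ m} : ℝ) /
    (Fintype.card F : ℝ) ^ n

/-- `F_q(z) = ∏_{deg P ≤ m} (1 - (z/q)^{deg P})⁻¹`, the product over monic irreducible
polynomials `P` over `F` of degree at most `m`. -/
def FqFun (F : Type) [Field F] [Fintype F] (m : ℕ) (z : ℝ) : ℝ :=
  ∏ᶠ p ∈ {p : Polynomial F | p.Monic ∧ Irreducible p ∧ p.natDegree ≤ m},
    (1 - (z / (Fintype.card F : ℝ)) ^ p.natDegree)⁻¹

/-- `G_q(z) = F_q(z) · exp(-∑_{i=1}^m z^i/i)`. -/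
def Gq (F : Type) [Field F] [Fintype F] (m : ℕ) (z : ℝ) : ℝ :=
  FqFun F m z * Real.exp (-(∑ i ∈ Finset.Icc 1 m, z ^ i / (i : ℝ)))

/-- The coefficients `d_{m,i}`. -/
def dcoef (m i : ℕ) : ℝ :=
  if i = m then -(1 / (m : ℝ)) * ∑ j ∈ Finset.Icc 2 m, (1 : ℝ) / (j : ℝ)
  else Real.Gamma ((i : ℝ) + (i : ℝ) / (m : ℝ)) /
    (((m : ℝ) - (i : ℝ)) * (Nat.factorial i : ℝ) * Real.Gamma (1 + (i : ℝ) / (m : ℝ)))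

/-- `T(s) = ∫₀^s ((e^t - 1)/t)·((t/m)/(1 - e^{-t/m}) - 1) dt`, integrand extended by `0` at `t = 0`. -/
def Tfun (m : ℕ) (s : ℝ) : ℝ :=
  ∫ t in (0:ℝ)..s,
    if t = 0 then 0 else
      ((Real.exp t - 1) / t) * ((t / (m : ℝ)) / (1 - Real.exp (-t / (m : ℝ))) - 1)

end

/-!
Write `a_d` for the number of monic irreducible polynomials of degree `d` and `y = x_q / q`. Gauss's
identity `∑_{d ∣ n} d a_d = q ^ n` says that `∑_{i ≤ m} x_q ^ i / i` is the part `dk ≤ m` of the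
double series `log F_q(x_q) = ∑_{d ≤ m} ∑_k a_d y ^ (dk) / k`, so `log G_q(x_q)` is the remaining
part `dk > m`. Since `a_m ≍ q ^ m / m`, its term `d = m`, `k = 2` is already of order
`x_q ^ (2m) / (m q ^ m)`. The condition `m ≤ (2 - ε) log_q n` in the saddle point equation
`∑_{d ≤ m} d a_d y ^ d / (1 - y ^ d) = n` forces `x_q ≥ q ^ t` for some `t > 1 / 2`. As `x_q` stays
away from `1`, the equation then gives `x_q ^ m ≍ min (n, q ^ m)`; as `q y ^ 2 = x_q ^ 2 / q` stays
away from `1` too, the double sum is dominated by a geometric sum whose top term is the one above,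
up to the factor `1 / (1 - y)` lost in summing the logarithmic tails.
-/

/-! ### Elementary sums -/

theorem ne_zero_of_mem_Icc_one {d m : ℕ} (hd : d ∈ Finset.Icc 1 m) : d ≠ 0 :=
  Nat.one_le_iff_ne_zero.1 (Finset.mem_Icc.1 hd).1

section GeometricSums

variable {K : Type*} [Field K] [LinearOrder K] [IsStrictOrderedRing K] {q r x y : K}

theorem div_sub_one_le_div_sub_one (hr : 1 < r) (hrx : r ≤ x) : x / (x - 1) ≤ r / (r - 1) := by
  rw [div_le_div_iff₀ (by linarith) (by linarith)]
  linarith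

theorem sum_Icc_pow_le (hx : 1 < x) (m : ℕ) :
    ∑ d ∈ Finset.Icc 1 m, x ^ d ≤ x / (x - 1) * x ^ m := by
  have hx' : 0 < x - 1 := sub_pos.2 hx
  induction m with
  | zero => simpa using (div_pos (by linarith) hx').le
  | succ m ih =>
    rw [Finset.sum_Icc_succ_top (by omega)]
    calc ∑ d ∈ Finset.Icc 1 m, x ^ d + x ^ (m + 1) ≤ x / (x - 1) * x ^ m + x ^ (m + 1) := by gcongr
      _ = x / (x - 1) * x ^ (m + 1) := by field_simp; ring

theorem sum_Icc_sub_mul_pow_le (hx : 1 < x) (m : ℕ) :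
    ∑ d ∈ Finset.Icc 1 m, ((m : K) + 1 - d) * x ^ d ≤ (x / (x - 1)) ^ 2 * x ^ m := by
  have := sub_pos.2 hx
  induction m with
  | zero => simpa using sq_nonneg (x / (x - 1))
  | succ m ih =>
    have split_top : ∑ d ∈ Finset.Icc 1 (m + 1), (((m + 1 : ℕ) : K) + 1 - d) * x ^ d =
        ∑ d ∈ Finset.Icc 1 m, ((m : K) + 1 - d) * x ^ d + ∑ d ∈ Finset.Icc 1 (m + 1), x ^ d := by
      simp only [Finset.sum_Icc_succ_top (Nat.le_add_left 1 m), ← add_assoc,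
        ← Finset.sum_add_distrib]
      push_cast
      congr 1
      · exact Finset.sum_congr rfl fun d _ ↦ by ring
      · ring
    calc ∑ d ∈ Finset.Icc 1 (m + 1), (((m + 1 : ℕ) : K) + 1 - d) * x ^ d
        ≤ (x / (x - 1)) ^ 2 * x ^ m + x / (x - 1) * x ^ (m + 1) := by
          rw [split_top]
          exact add_le_add ih (sum_Icc_pow_le hx (m + 1))
      _ = (x / (x - 1)) ^ 2 * x ^ (m + 1) := by field_simp; ring

theorem one_sub_pow_pos {d : ℕ} (hy₀ : 0 ≤ y) (hy₁ : y < 1) (hd : d ≠ 0) : 0 < 1 - y ^ d :=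
  sub_pos.2 (pow_lt_one₀ hy₀ hy₁ hd)

theorem pow_mul_pow_div_add_one_le (hq : 0 ≤ q) (hy₀ : 0 ≤ y) (hy₁ : y ≤ 1) {d m : ℕ}
    (hd : d ∈ Finset.Icc 1 m) :
    q ^ d * (y ^ d) ^ (m / d + 1) ≤ (q * y ^ 2) ^ d + if d ≤ m / 2 then q ^ d * y ^ m else 0 := by
  have hd₀ := Nat.pos_of_ne_zero (ne_zero_of_mem_Icc_one hd)
  split_ifs with hdm
  · calc q ^ d * (y ^ d) ^ (m / d + 1) ≤ q ^ d * y ^ m := by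
          rw [← pow_mul]
          gcongr q ^ d * ?_
          exact pow_le_pow_of_le_one hy₀ hy₁ (Nat.lt_mul_div_succ m hd₀).le
      _ ≤ (q * y ^ 2) ^ d + q ^ d * y ^ m := le_add_of_nonneg_left (by positivity)
  · have two_le : 2 ≤ m / d + 1 :=
      Nat.succ_le_succ (Nat.div_pos (Finset.mem_Icc.1 hd).2 hd₀)
    calc q ^ d * (y ^ d) ^ (m / d + 1) ≤ q ^ d * (y ^ d) ^ 2 := by
          gcongr q ^ d * ?_
          exact pow_le_pow_of_le_one (pow_nonneg hy₀ d) (pow_le_one₀ hy₀ hy₁) two_le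
      _ = (q * y ^ 2) ^ d + 0 := by rw [mul_pow, ← pow_mul, ← pow_mul, mul_comm d, add_zero]

theorem sum_Icc_half_pow_mul_pow_le (hq : 2 ≤ q) (hy : 0 ≤ y) (hqy : 1 ≤ q * y ^ 2) (m : ℕ) :
    (∑ d ∈ Finset.Icc 1 (m / 2), q ^ d) * y ^ m ≤ 2 * (q * y ^ 2) ^ m := by
  have sum_le : ∑ d ∈ Finset.Icc 1 (m / 2), q ^ d ≤ 2 * q ^ (m / 2) := by
    refine (sum_Icc_pow_le (by linarith) _).trans ?_
    gcongr
    rw [div_le_iff₀ (by linarith)]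
    linarith
  have half_pow_le : q ^ (m / 2) ≤ (q * y) ^ m := by
    refine le_of_sq_le_sq ?_ (by positivity)
    calc (q ^ (m / 2)) ^ 2 = q ^ (m / 2 * 2) := by rw [pow_mul]
      _ ≤ q ^ m := pow_le_pow_right₀ (by linarith) (Nat.div_mul_le_self m 2)
      _ ≤ q ^ m * (q * y ^ 2) ^ m := le_mul_of_one_le_right (by positivity) (one_le_pow₀ hqy)
      _ = ((q * y) ^ m) ^ 2 := by rw [← mul_pow, ← pow_mul, mul_comm m, pow_mul]; ring_nf
  calc (∑ d ∈ Finset.Icc 1 (m / 2), q ^ d) * y ^ m ≤ 2 * (q * y) ^ m * y ^ m := by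
        gcongr
        linarith
    _ = 2 * (q * y ^ 2) ^ m := by rw [mul_assoc, ← mul_pow]; ring_nf

end GeometricSums

theorem sum_Icc_pow_add_two_le {q : ℕ} (hq : 2 ≤ q) (k : ℕ) :
    ∑ d ∈ Finset.Icc 1 k, q ^ d + 2 ≤ 2 * q ^ k := by
  induction k with
  | zero => simp
  | succ k ih =>
    rw [Finset.sum_Icc_succ_top (by omega), pow_succ]
    nlinarith [Nat.mul_le_mul_left (q ^ k) hq]

theorem mul_one_sub_pow_le_mul_one_sub_pow {y : ℝ} (hy : 0 ≤ y) {d m : ℕ} (hdm : d ≤ m) :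
    d * (1 - y ^ m) ≤ m * (1 - y ^ d) := by
  rcases Nat.eq_zero_or_pos m with rfl | hm
  · simp [Nat.le_zero.1 hdm]
  have hm' : (0 : ℝ) < m := by exact_mod_cast hm
  have bernoulli := rpow_one_add_le_one_add_mul_self (s := y ^ m - 1) (p := d / m)
    (by linarith [pow_nonneg hy m]) (by positivity)
    (div_le_one_of_le₀ (by exact_mod_cast hdm) hm'.le)
  rw [add_sub_cancel, ← rpow_natCast y m, ← rpow_mul hy, mul_div_cancel₀ _ hm'.ne',
    rpow_natCast, rpow_natCast] at bernoulli
  calc d * (1 - y ^ m) = m * (1 - (1 + d / m * (y ^ m - 1))) := by field_simp; ring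
    _ ≤ m * (1 - y ^ d) := by gcongr

theorem sum_Icc_sum_divisors {M : Type*} [AddCommMonoid M] (f : ℕ → ℕ → M) (m : ℕ) :
    ∑ n ∈ Finset.Icc 1 m, ∑ d ∈ n.divisors, f d (n / d) =
      ∑ d ∈ Finset.Icc 1 m, ∑ k ∈ Finset.Icc 1 (m / d), f d k := by
  simp only [Finset.sum_sigma']
  refine Finset.sum_nbij' (fun p ↦ ⟨p.2, p.1 / p.2⟩) (fun p ↦ ⟨p.1 * p.2, p.1⟩) ?_ ?_ ?_ ?_ ?_
  · rintro ⟨n, d⟩ h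
    simp only [Finset.mem_sigma, Finset.mem_Icc, Nat.mem_divisors] at h ⊢
    have hd := Nat.pos_of_dvd_of_pos h.2.1 h.1.1
    have hdn := Nat.le_of_dvd h.1.1 h.2.1
    exact ⟨⟨hd, hdn.trans h.1.2⟩, Nat.div_pos hdn hd, Nat.div_le_div_right h.1.2⟩
  · rintro ⟨d, k⟩ h
    simp only [Finset.mem_sigma, Finset.mem_Icc, Nat.mem_divisors] at h ⊢
    have hdk : 0 < d * k := Nat.mul_pos h.1.1 h.2.1
    exact ⟨⟨hdk, (Nat.mul_le_mul_left d h.2.2).trans (Nat.mul_div_le m d)⟩,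
      dvd_mul_right d k, hdk.ne'⟩
  · rintro ⟨n, d⟩ h
    simp only [Finset.mem_sigma, Nat.mem_divisors] at h
    simp only [Nat.mul_div_cancel' h.2.1]
  · rintro ⟨d, k⟩ h
    simp only [Finset.mem_sigma, Finset.mem_Icc] at h
    simp only [Nat.mul_div_cancel_left k h.1.1]
  · exact fun _ _ ↦ rfl

/-- The tail `∑_{k > K} w ^ k / k` of the logarithmic series, meaningful for `|w| < 1`. -/
noncomputable def logTail (K : ℕ) (w : ℝ) : ℝ :=
  -log (1 - w) - ∑ k ∈ Finset.Icc 1 K, w ^ k / k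

section LogTail

variable {w : ℝ}

theorem hasSum_logTail (K : ℕ) (hw : |w| < 1) :
    HasSum (fun j : ℕ ↦ w ^ (j + K + 1) / ((j + K + 1 : ℕ) : ℝ)) (logTail K w) := by
  have initial_sum : ∑ k ∈ Finset.Icc 1 K, w ^ k / (k : ℝ) =
      ∑ i ∈ Finset.range K, w ^ (i + 1) / ((i : ℝ) + 1) := by
    rw [← Finset.Ico_add_one_right_eq_Icc, Finset.sum_Ico_eq_sum_range]
    simp [add_comm]
  rw [logTail, initial_sum]
  simpa using (hasSum_nat_add_iff' K).2 (hasSum_pow_div_log_of_abs_lt_one hw)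

theorem pow_div_le_logTail (K : ℕ) (hw₀ : 0 ≤ w) (hw₁ : w < 1) :
    w ^ (K + 1) / ((K + 1 : ℕ) : ℝ) ≤ logTail K w := by
  simpa using le_hasSum (hasSum_logTail K (abs_lt.2 ⟨by linarith, hw₁⟩)) 0
    fun j _ ↦ by positivity

theorem logTail_nonneg (K : ℕ) (hw₀ : 0 ≤ w) (hw₁ : w < 1) : 0 ≤ logTail K w :=
  le_trans (by positivity) (pow_div_le_logTail K hw₀ hw₁)

theorem logTail_le (K : ℕ) (hw₀ : 0 ≤ w) (hw₁ : w < 1) :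
    logTail K w ≤ w ^ (K + 1) / ((K + 1 : ℕ) : ℝ) * (1 - w)⁻¹ := by
  refine hasSum_le (fun j ↦ ?_) (hasSum_logTail K (abs_lt.2 ⟨by linarith, hw₁⟩))
    ((hasSum_geometric_of_lt_one hw₀ hw₁).mul_left _)
  rw [div_mul_eq_mul_div, ← pow_add, show K + 1 + j = j + K + 1 by ring]
  gcongr
  omega

end LogTail

/-! ### Necklace counts -/

/-- `a` satisfies Gauss's identity `∑_{d ∣ n} d a_d = q ^ n`, as do the numbers `a d` of monic
irreducible polynomials of degree `d` over a field with `q` elements, or of aperiodic necklaces of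
length `d` in `q` colours. -/
def IsNecklaceCount (q : ℕ) (a : ℕ → ℕ) : Prop :=
  ∀ n : ℕ, n ≠ 0 → ∑ d ∈ n.divisors, d * a d = q ^ n

/-- The value `z F'(z) / F(z)` at `z = q y` for `F(z) = ∏_{d ≤ m} (1 - (z / q) ^ d) ^ (-a d)`;
the saddle point equation sets it equal to `n`. -/
noncomputable def saddleSum (a : ℕ → ℕ) (m : ℕ) (y : ℝ) : ℝ :=
  ∑ d ∈ Finset.Icc 1 m, d * a d * (y ^ d / (1 - y ^ d))

/-- The sum `∑_{d ≤ m} a_d ∑_{dk > m} y ^ (dk) / k`, which is the value of `log G_q` at `q y` when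
`a d` counts the monic irreducible polynomials of degree `d`. -/
noncomputable def tailSum (a : ℕ → ℕ) (m : ℕ) (y : ℝ) : ℝ :=
  ∑ d ∈ Finset.Icc 1 m, a d * logTail (m / d) (y ^ d)

section Monotonicity

variable {y z : ℝ}

theorem saddleSum_mono (a : ℕ → ℕ) (m : ℕ) (hy : 0 ≤ y) (hyz : y ≤ z) (hz : z < 1) :
    saddleSum a m y ≤ saddleSum a m z := by
  refine Finset.sum_le_sum fun d hd ↦ ?_
  have := one_sub_pow_pos (hy.trans hyz) hz (ne_zero_of_mem_Icc_one hd)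
  have := hy.trans hyz
  gcongr

theorem single_le_saddleSum (a : ℕ → ℕ) {m : ℕ} (hm : m ≠ 0) (hy₀ : 0 ≤ y) (hy₁ : y < 1) :
    m * a m * (y ^ m / (1 - y ^ m)) ≤ saddleSum a m y := by
  refine Finset.single_le_sum (f := fun d : ℕ ↦ (d : ℝ) * a d * (y ^ d / (1 - y ^ d)))
    (fun d hd ↦ ?_) (Finset.mem_Icc.2 ⟨Nat.one_le_iff_ne_zero.2 hm, le_rfl⟩)
  have := one_sub_pow_pos hy₀ hy₁ (ne_zero_of_mem_Icc_one hd)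
  positivity

theorem single_le_tailSum (a : ℕ → ℕ) {m : ℕ} (hm : m ≠ 0) (hy₀ : 0 ≤ y) (hy₁ : y < 1) :
    a m * logTail 1 (y ^ m) ≤ tailSum a m y := by
  rw [← Nat.div_self (Nat.pos_of_ne_zero hm)]
  refine Finset.single_le_sum (f := fun d : ℕ ↦ (a d : ℝ) * logTail (m / d) (y ^ d))
    (fun d hd ↦ ?_) (Finset.mem_Icc.2 ⟨Nat.one_le_iff_ne_zero.2 hm, le_rfl⟩)
  have := logTail_nonneg (m / d) (pow_nonneg hy₀ d)
    (pow_lt_one₀ hy₀ hy₁ (ne_zero_of_mem_Icc_one hd))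
  positivity

end Monotonicity

namespace IsNecklaceCount

variable {q : ℕ} {a : ℕ → ℕ} {m : ℕ} {y : ℝ}

theorem mul_le_pow (ha : IsNecklaceCount q a) {d : ℕ} (hd : d ≠ 0) : d * a d ≤ q ^ d := by
  rw [← ha d hd]
  exact Finset.single_le_sum (f := fun d ↦ d * a d) (fun _ _ ↦ Nat.zero_le _)
    (Nat.mem_divisors_self d hd)

theorem sum_properDivisors_le (ha : IsNecklaceCount q a) (m : ℕ) :
    ∑ d ∈ m.properDivisors, d * a d ≤ ∑ d ∈ Finset.Icc 1 (m / 2), q ^ d := by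
  have le_half : m.properDivisors ⊆ Finset.Icc 1 (m / 2) := fun d hd ↦ by
    obtain ⟨⟨k, rfl⟩, hlt⟩ := Nat.mem_properDivisors.1 hd
    have hk : 2 ≤ k := by
      by_contra! hk
      interval_cases k <;> omega
    exact Finset.mem_Icc.2 ⟨Nat.pos_of_mem_properDivisors hd,
      (Nat.le_div_iff_mul_le two_pos).2 (Nat.mul_le_mul_left d hk)⟩
  exact (Finset.sum_le_sum fun d hd ↦ ha.mul_le_pow (Nat.pos_of_mem_properDivisors hd).ne').trans
    (Finset.sum_le_sum_of_subset le_half)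

theorem pow_le_two_mul (ha : IsNecklaceCount q a) (hq : 2 ≤ q) (hm : m ≠ 0) :
    q ^ m ≤ 2 * (m * a m) := by
  have gauss : ∑ d ∈ m.properDivisors, d * a d + m * a m = q ^ m := by
    rw [← ha m hm, ← Nat.insert_self_properDivisors hm,
      Finset.sum_insert Nat.self_notMem_properDivisors, add_comm]
  have proper_le : 2 * ∑ d ∈ m.properDivisors, d * a d ≤ q ^ m := by
    have h₁ := ha.sum_properDivisors_le m
    have h₂ := sum_Icc_pow_add_two_le hq (m / 2)
    have h₃ : q ^ (m / 2) * q ^ (m / 2) ≤ q ^ m := by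
      rw [← pow_add]
      exact Nat.pow_le_pow_right (by omega) (by omega)
    -- `4 t - 4 ≤ t ^ 2` for `t = q ^ (m / 2)`
    zify at *
    nlinarith [sq_nonneg ((q : ℤ) ^ (m / 2) - 2)]
  omega

theorem pow_le_two_mul_cast (ha : IsNecklaceCount q a) (hq : 2 ≤ q) (hm : m ≠ 0) :
    (q : ℝ) ^ m ≤ 2 * (m * a m) := by
  exact_mod_cast ha.pow_le_two_mul hq hm

theorem mul_le_pow_cast (ha : IsNecklaceCount q a) {d : ℕ} (hd : d ≠ 0) :
    (d : ℝ) * a d ≤ (q : ℝ) ^ d := by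
  exact_mod_cast ha.mul_le_pow hd

theorem sum_pow_div (ha : IsNecklaceCount q a) (m : ℕ) (y : ℝ) :
    ∑ n ∈ Finset.Icc 1 m, (q * y) ^ n / n =
      ∑ d ∈ Finset.Icc 1 m, a d * ∑ k ∈ Finset.Icc 1 (m / d), (y ^ d) ^ k / k := by
  simp only [Finset.mul_sum]
  rw [← sum_Icc_sum_divisors fun d k ↦ (a d : ℝ) * ((y ^ d) ^ k / k)]
  refine Finset.sum_congr rfl fun n hn ↦ ?_
  have gauss : (q : ℝ) ^ n = ∑ d ∈ n.divisors, (d : ℝ) * a d := by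
    exact_mod_cast (ha n (ne_zero_of_mem_Icc_one hn)).symm
  rw [mul_pow, gauss, Finset.sum_mul, Finset.sum_div]
  refine Finset.sum_congr rfl fun d hd ↦ ?_
  obtain ⟨k, rfl⟩ := Nat.dvd_of_mem_divisors hd
  have hd₀ : 0 < d := Nat.pos_of_mem_divisors hd
  rw [Nat.mul_div_cancel_left k hd₀, pow_mul, Nat.cast_mul]
  field_simp

theorem saddleSum_le (ha : IsNecklaceCount q a) (m : ℕ) (hy₀ : 0 ≤ y) (hy₁ : y < 1) :
    saddleSum a m y ≤ (1 - y)⁻¹ * ∑ d ∈ Finset.Icc 1 m, (q * y) ^ d := by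
  rw [Finset.mul_sum]
  refine Finset.sum_le_sum fun d hd ↦ ?_
  have hd₀ := ne_zero_of_mem_Icc_one hd
  have := sub_pos.2 hy₁
  have hyd : 1 - y ≤ 1 - y ^ d := sub_le_sub_left (pow_le_of_le_one hy₀ hy₁.le hd₀) 1
  calc d * a d * (y ^ d / (1 - y ^ d)) ≤ d * a d * (y ^ d / (1 - y)) := by gcongr
    _ ≤ (q : ℝ) ^ d * (y ^ d / (1 - y)) := by
        gcongr
        exact ha.mul_le_pow_cast hd₀
    _ = (1 - y)⁻¹ * (q * y) ^ d := by rw [mul_pow]; ring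

/-- If `y ^ m ≤ 1 / 2`, then `1 - y ^ d ≥ d / (2 * m)`, so the `d`-th term is at most
`2 * (m / d) * (q * y) ^ d`. -/
theorem saddleSum_le_of_pow_le_half (ha : IsNecklaceCount q a) (hy₀ : 0 ≤ y) (hy₁ : y < 1)
    (hqy : 1 < q * y) (hym : y ^ m ≤ 1 / 2) :
    saddleSum a m y ≤ 2 * (q * y / (q * y - 1)) ^ 2 * (q * y) ^ m := by
  have term_le : ∀ d ∈ Finset.Icc 1 m,
      d * a d * (y ^ d / (1 - y ^ d)) ≤ 2 * (((m : ℝ) + 1 - d) * (q * y) ^ d) := fun d hd ↦ by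
    have hd₀ := ne_zero_of_mem_Icc_one hd
    have hpos := one_sub_pow_pos hy₀ hy₁ hd₀
    have hd₁ : (1 : ℝ) ≤ d := by exact_mod_cast (Finset.mem_Icc.1 hd).1
    have hdm : (d : ℝ) ≤ m := by exact_mod_cast (Finset.mem_Icc.1 hd).2
    have inv_le : (1 - y ^ d)⁻¹ ≤ 2 * ((m : ℝ) + 1 - d) := by
      have h := mul_one_sub_pow_le_mul_one_sub_pow hy₀ (Finset.mem_Icc.1 hd).2
      have hmd : (m : ℝ) ≤ d * (m + 1 - d) := by nlinarith
      rw [inv_le_iff_one_le_mul₀ hpos]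
      refine le_of_mul_le_mul_left (a := (d : ℝ)) ?_ (by linarith)
      calc (d : ℝ) * 1 ≤ 2 * (m * (1 - y ^ d)) := by nlinarith
        _ ≤ 2 * (d * (m + 1 - d) * (1 - y ^ d)) := by gcongr
        _ = d * (2 * (m + 1 - d) * (1 - y ^ d)) := by ring
    calc d * a d * (y ^ d / (1 - y ^ d)) = d * a d * (y ^ d * (1 - y ^ d)⁻¹) := by ring
      _ ≤ (q : ℝ) ^ d * (y ^ d * (2 * ((m : ℝ) + 1 - d))) := by
        gcongr
        exact ha.mul_le_pow_cast hd₀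
      _ = 2 * (((m : ℝ) + 1 - d) * (q * y) ^ d) := by rw [mul_pow]; ring
  calc saddleSum a m y ≤ 2 * ∑ d ∈ Finset.Icc 1 m, ((m : ℝ) + 1 - d) * (q * y) ^ d := by
        rw [Finset.mul_sum]
        exact Finset.sum_le_sum term_le
    _ ≤ 2 * ((q * y / (q * y - 1)) ^ 2 * (q * y) ^ m) := by
        gcongr
        exact sum_Icc_sub_mul_pow_le hqy m
    _ = 2 * (q * y / (q * y - 1)) ^ 2 * (q * y) ^ m := by ring

theorem min_saddleSum_le (ha : IsNecklaceCount q a) (hy₀ : 0 ≤ y) (hy₁ : y < 1)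
    (hqy : 1 < q * y) :
    min (saddleSum a m y) ((q : ℝ) ^ m) ≤ 2 * (q * y / (q * y - 1)) ^ 2 * (q * y) ^ m := by
  rcases le_or_gt (y ^ m) (1 / 2) with hym | hym
  · exact (min_le_left _ _).trans (ha.saddleSum_le_of_pow_le_half hy₀ hy₁ hqy hym)
  · have one_le : 1 ≤ (q * y / (q * y - 1)) ^ 2 :=
      one_le_pow₀ ((one_le_div (sub_pos.2 hqy)).2 (sub_le_self _ zero_le_one))
    calc min (saddleSum a m y) ((q : ℝ) ^ m) ≤ 2 * 1 * ((q : ℝ) ^ m * (1 / 2)) := by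
          rw [mul_one, mul_left_comm, mul_one_div_cancel two_ne_zero, mul_one]
          exact min_le_right _ _
      _ ≤ 2 * (q * y / (q * y - 1)) ^ 2 * ((q : ℝ) ^ m * y ^ m) := by gcongr
      _ = 2 * (q * y / (q * y - 1)) ^ 2 * (q * y) ^ m := by rw [mul_pow]

theorem pow_le_two_mul_min (ha : IsNecklaceCount q a) (hq : 2 ≤ q) (hm : m ≠ 0) (hy₀ : 0 ≤ y)
    (hy₁ : y < 1) : (q * y) ^ m ≤ 2 * min (saddleSum a m y) ((q : ℝ) ^ m) := by
  rw [mul_min_of_nonneg _ _ zero_le_two, mul_pow]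
  have hpos := one_sub_pow_pos hy₀ hy₁ hm
  refine le_min ?_ ?_
  · calc (q : ℝ) ^ m * y ^ m ≤ 2 * (m * a m) * (y ^ m / (1 - y ^ m)) := by
          gcongr
          · exact ha.pow_le_two_mul_cast hq hm
          · exact le_div_self (by positivity) hpos (sub_le_self _ (by positivity))
      _ ≤ 2 * saddleSum a m y := by
          rw [mul_assoc]
          gcongr
          exact single_le_saddleSum a hm hy₀ hy₁
  · calc (q : ℝ) ^ m * y ^ m ≤ (q : ℝ) ^ m :=
          mul_le_of_le_one_right (by positivity) (pow_le_one₀ hy₀ hy₁.le)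
      _ ≤ 2 * (q : ℝ) ^ m := le_mul_of_one_le_left (by positivity) one_le_two

theorem sq_pow_div_le_tailSum (ha : IsNecklaceCount q a) (hq : 2 ≤ q) (hm : m ≠ 0) (hy₀ : 0 ≤ y)
    (hy₁ : y < 1) : ((q * y) ^ m) ^ 2 / (m * (q : ℝ) ^ m) / 4 ≤ tailSum a m y := by
  have le_count : (q : ℝ) ^ m / (2 * m) ≤ a m := by
    rw [div_le_iff₀ (by positivity)]
    linarith [ha.pow_le_two_mul_cast hq hm]
  calc ((q * y) ^ m) ^ 2 / (m * (q : ℝ) ^ m) / 4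
      = (q : ℝ) ^ m / (2 * m) * ((y ^ m) ^ (1 + 1) / ((1 + 1 : ℕ) : ℝ)) := by
        rw [mul_pow]
        push_cast
        field_simp
        norm_num
    _ ≤ a m * logTail 1 (y ^ m) := by
        gcongr
        exact pow_div_le_logTail 1 (pow_nonneg hy₀ m) (pow_lt_one₀ hy₀ hy₁ hm)
    _ ≤ tailSum a m y := single_le_tailSum a hm hy₀ hy₁

theorem mul_logTail_le (ha : IsNecklaceCount q a) (hy₀ : 0 ≤ y) (hy₁ : y < 1) {d : ℕ}
    (hd : d ∈ Finset.Icc 1 m) :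
    a d * logTail (m / d) (y ^ d) ≤
      (m * (1 - y))⁻¹ * ((q : ℝ) ^ d * (y ^ d) ^ (m / d + 1)) := by
  have hd₀ := ne_zero_of_mem_Icc_one hd
  have hdm := (Finset.mem_Icc.1 hd).2
  have hm : (0 : ℝ) < m := by exact_mod_cast (Nat.pos_of_ne_zero hd₀).trans_le hdm
  have := sub_pos.2 hy₁
  have hyd : 1 - y ≤ 1 - y ^ d := sub_le_sub_left (pow_le_of_le_one hy₀ hy₁.le hd₀) 1
  have count_div_le : (a d : ℝ) / ((m / d + 1 : ℕ) : ℝ) ≤ (q : ℝ) ^ d / m := by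
    have hm_le : (m : ℝ) ≤ d * ((m / d + 1 : ℕ) : ℝ) := by
      exact_mod_cast (Nat.lt_mul_div_succ m (Nat.pos_of_ne_zero hd₀)).le
    rw [div_le_div_iff₀ (by positivity) hm]
    calc (a d : ℝ) * m ≤ a d * (d * ((m / d + 1 : ℕ) : ℝ)) := by gcongr
      _ = d * a d * ((m / d + 1 : ℕ) : ℝ) := by ring
      _ ≤ (q : ℝ) ^ d * ((m / d + 1 : ℕ) : ℝ) := by
        gcongr
        exact ha.mul_le_pow_cast hd₀
  calc a d * logTail (m / d) (y ^ d)
      ≤ a d * ((y ^ d) ^ (m / d + 1) / ((m / d + 1 : ℕ) : ℝ) * (1 - y ^ d)⁻¹) := by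
        gcongr
        exact logTail_le _ (pow_nonneg hy₀ d) (pow_lt_one₀ hy₀ hy₁ hd₀)
    _ ≤ a d * ((y ^ d) ^ (m / d + 1) / ((m / d + 1 : ℕ) : ℝ) * (1 - y)⁻¹) := by gcongr
    _ = a d / ((m / d + 1 : ℕ) : ℝ) * ((y ^ d) ^ (m / d + 1) * (1 - y)⁻¹) := by ring
    _ ≤ (q : ℝ) ^ d / m * ((y ^ d) ^ (m / d + 1) * (1 - y)⁻¹) := by gcongr
    _ = (m * (1 - y))⁻¹ * ((q : ℝ) ^ d * (y ^ d) ^ (m / d + 1)) := by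
        rw [mul_inv]
        ring

theorem tailSum_le (ha : IsNecklaceCount q a) (hq : 2 ≤ q) (hy₀ : 0 ≤ y) (hy₁ : y < 1)
    (hqy : 1 < q * y ^ 2) :
    tailSum a m y ≤ (q * y ^ 2 / (q * y ^ 2 - 1) + 2) *
      (((q * y) ^ m) ^ 2 / (m * (q : ℝ) ^ m)) * (1 / (1 - y)) := by
  have hq' : (2 : ℝ) ≤ q := by exact_mod_cast hq
  have := sub_pos.2 hy₁
  have filter_half : (Finset.Icc 1 m).filter (· ≤ m / 2) = Finset.Icc 1 (m / 2) := by
    ext d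
    simp only [Finset.mem_filter, Finset.mem_Icc]
    omega
  calc tailSum a m y
      ≤ ∑ d ∈ Finset.Icc 1 m, (m * (1 - y))⁻¹ *
          ((q * y ^ 2) ^ d + if d ≤ m / 2 then (q : ℝ) ^ d * y ^ m else 0) := by
        refine Finset.sum_le_sum fun d hd ↦ (ha.mul_logTail_le hy₀ hy₁ hd).trans ?_
        gcongr
        exact pow_mul_pow_div_add_one_le (Nat.cast_nonneg q) hy₀ hy₁.le hd
    _ = (m * (1 - y))⁻¹ * (∑ d ∈ Finset.Icc 1 m, (q * y ^ 2) ^ d +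
          (∑ d ∈ Finset.Icc 1 (m / 2), (q : ℝ) ^ d) * y ^ m) := by
        rw [← Finset.mul_sum, Finset.sum_add_distrib, ← Finset.sum_filter, filter_half,
          Finset.sum_mul]
    _ ≤ (m * (1 - y))⁻¹ * (q * y ^ 2 / (q * y ^ 2 - 1) * (q * y ^ 2) ^ m +
          2 * (q * y ^ 2) ^ m) := by
        refine mul_le_mul_of_nonneg_left ?_ (by positivity)
        exact add_le_add (sum_Icc_pow_le hqy m) (sum_Icc_half_pow_mul_pow_le hq' hy₀ hqy.le m)
    _ = (q * y ^ 2 / (q * y ^ 2 - 1) + 2) *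
          (((q * y) ^ m) ^ 2 / (m * (q : ℝ) ^ m)) * (1 / (1 - y)) := by
        have sq_eq : (q * y ^ 2) ^ m = ((q * y) ^ m) ^ 2 / (q : ℝ) ^ m := by
          rw [eq_div_iff (by positivity)]
          simp only [mul_pow]
          ring
        rw [sq_eq, mul_inv]
        ring

end IsNecklaceCount

/-! ### Asymptotics of the saddle point -/

theorem eventually_mul_rpow_lt {s : ℝ} (hs : s < 1) (C : ℝ) :
    ∀ᶠ n : ℕ in Filter.atTop, C * (n : ℝ) ^ s < n := by
  have growth := (tendsto_rpow_atTop (sub_pos.2 hs)).comp tendsto_natCast_atTop_atTop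
  filter_upwards [growth.eventually_gt_atTop C, Filter.eventually_gt_atTop 0] with n hC hn
  have hn' : (0 : ℝ) < n := by exact_mod_cast hn
  calc C * (n : ℝ) ^ s < (n : ℝ) ^ (1 - s) * (n : ℝ) ^ s := by
        gcongr
        exact hC
    _ = n := by rw [← rpow_add hn', sub_add_cancel, rpow_one]

theorem rpow_pow_le_rpow_of_le_log_div {q x t β : ℝ} (hq : 1 < q) (hx : 0 < x) (ht : 0 ≤ t) {m : ℕ}
    (hm : m ≤ β * log x / log q) : (q ^ t) ^ m ≤ x ^ (t * β) := by
  rw [le_div_iff₀ (log_pos hq)] at hm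
  rw [rpow_def_of_pos (by linarith), rpow_def_of_pos hx, ← exp_nat_mul, exp_le_exp]
  calc m * (log q * t) = t * (m * log q) := by ring
    _ ≤ t * (β * log x) := by gcongr
    _ = log x * (t * β) := by ring

theorem exists_exponent {β : ℝ} (hβ : β < 2) : ∃ t : ℝ, 1 / 2 < t ∧ t < 1 ∧ t * β < 1 := by
  have : 0 < 4 - β := by linarith
  refine ⟨(3 - β) / (4 - β), ?_, ?_, ?_⟩
  · rw [div_lt_div_iff₀ two_pos this]
    linarith
  · rw [div_lt_one this]
    linarith
  · rw [div_mul_eq_mul_div, div_lt_one this]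
    nlinarith [sq_pos_of_pos (sub_pos.2 hβ)]

namespace IsNecklaceCount

variable {q : ℕ} {a : ℕ → ℕ} {m : ℕ} {r y : ℝ}

theorem eventually_rpow_le_mul_of_saddleSum_eq (ha : IsNecklaceCount q a) (hq : 2 ≤ q) {t β : ℝ}
    (ht₀ : 0 < t) (ht₁ : t < 1) (htβ : t * β < 1) :
    ∀ᶠ n : ℕ in Filter.atTop, ∀ m : ℕ, m ≤ β * log n / log q →
      ∀ y : ℝ, 0 ≤ y → saddleSum a m y = n → (q : ℝ) ^ t ≤ q * y := by
  have hq₁ : (1 : ℝ) < q := by exact_mod_cast hq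
  have hq₀ : (0 : ℝ) < q := by linarith
  set r : ℝ := (q : ℝ) ^ t
  have hr : 1 < r := one_lt_rpow hq₁ ht₀
  have hrq : r < q := by simpa using rpow_lt_rpow_of_exponent_lt hq₁ ht₁
  have hrq₁ : r / q < 1 := (div_lt_one hq₀).2 hrq
  filter_upwards [eventually_mul_rpow_lt htβ ((1 - r / q)⁻¹ * (r / (r - 1))),
    Filter.eventually_gt_atTop 0] with n hlt hn m hm y hy₀ hS
  by_contra! hyr
  have := sub_pos.2 hr
  have := sub_pos.2 hrq₁
  refine hlt.not_ge ?_
  calc (n : ℝ) = saddleSum a m y := hS.symm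
    _ ≤ saddleSum a m (r / q) :=
      saddleSum_mono a m hy₀ (by rw [le_div_iff₀ hq₀]; linarith) hrq₁
    _ ≤ (1 - r / q)⁻¹ * ∑ d ∈ Finset.Icc 1 m, r ^ d := by
      simpa only [mul_div_cancel₀ r hq₀.ne'] using ha.saddleSum_le m (by positivity) hrq₁
    _ ≤ (1 - r / q)⁻¹ * (r / (r - 1) * r ^ m) := by
      gcongr
      exact sum_Icc_pow_le hr m
    _ ≤ (1 - r / q)⁻¹ * (r / (r - 1) * (n : ℝ) ^ (t * β)) := by
      gcongr
      exact rpow_pow_le_rpow_of_le_log_div hq₁ (by exact_mod_cast hn) ht₀.le hm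
    _ = (1 - r / q)⁻¹ * (r / (r - 1)) * (n : ℝ) ^ (t * β) := (mul_assoc _ _ _).symm

theorem mul_sq_min_div_le_tailSum (ha : IsNecklaceCount q a) (hq : 2 ≤ q) (hm : m ≠ 0)
    (hy₀ : 0 ≤ y) (hy₁ : y < 1) (hr : 1 < r) (hry : r ≤ q * y) :
    1 / (16 * (r / (r - 1)) ^ 4) * min (saddleSum a m y) ((q : ℝ) ^ m) ^ 2 / (m * (q : ℝ) ^ m) ≤
      tailSum a m y := by
  have hA : 0 < r / (r - 1) := div_pos (by linarith) (sub_pos.2 hr)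
  have min_nonneg : 0 ≤ min (saddleSum a m y) ((q : ℝ) ^ m) := by
    have := ha.pow_le_two_mul_min hq hm hy₀ hy₁
    have : 0 ≤ (q * y) ^ m := by positivity
    linarith
  have min_le : min (saddleSum a m y) ((q : ℝ) ^ m) ≤ 2 * (r / (r - 1)) ^ 2 * (q * y) ^ m := by
    refine (ha.min_saddleSum_le hy₀ hy₁ (hr.trans_le hry)).trans ?_
    have : 0 ≤ q * y / (q * y - 1) := div_nonneg (by linarith) (by linarith)
    gcongr 2 * ?_ ^ 2 * _
    exact div_sub_one_le_div_sub_one hr hry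
  calc 1 / (16 * (r / (r - 1)) ^ 4) * min (saddleSum a m y) ((q : ℝ) ^ m) ^ 2 / (m * (q : ℝ) ^ m)
      ≤ 1 / (16 * (r / (r - 1)) ^ 4) * (2 * (r / (r - 1)) ^ 2 * (q * y) ^ m) ^ 2 /
          (m * (q : ℝ) ^ m) := by gcongr
    _ = ((q * y) ^ m) ^ 2 / (m * (q : ℝ) ^ m) / 4 := by
        generalize r / (r - 1) = A at hA
        field_simp
        ring
    _ ≤ tailSum a m y := ha.sq_pow_div_le_tailSum hq hm hy₀ hy₁

theorem tailSum_le_mul_sq_min_div (ha : IsNecklaceCount q a) (hq : 2 ≤ q) (hm : m ≠ 0)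
    (hy₀ : 0 ≤ y) (hy₁ : y < 1) (hr : 0 ≤ r) (hqr : q < r ^ 2) (hry : r ≤ q * y) :
    tailSum a m y ≤ 4 * (r ^ 2 / q / (r ^ 2 / q - 1) + 2) *
      min (saddleSum a m y) ((q : ℝ) ^ m) ^ 2 / (m * (q : ℝ) ^ m) * (1 / (1 - y)) := by
  have hq₀ : (0 : ℝ) < q := by positivity
  have hs : 1 < r ^ 2 / q := (one_lt_div hq₀).2 hqr
  have hsy : r ^ 2 / q ≤ q * y ^ 2 := by
    rw [div_le_iff₀ hq₀]
    calc r ^ 2 ≤ (q * y) ^ 2 := by gcongr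
      _ = q * y ^ 2 * q := by ring
  have := sub_pos.2 hs
  have := sub_pos.2 hy₁
  calc tailSum a m y
      ≤ (q * y ^ 2 / (q * y ^ 2 - 1) + 2) * (((q * y) ^ m) ^ 2 / (m * (q : ℝ) ^ m)) *
          (1 / (1 - y)) := ha.tailSum_le hq hy₀ hy₁ (hs.trans_le hsy)
    _ ≤ (r ^ 2 / q / (r ^ 2 / q - 1) + 2) *
          ((2 * min (saddleSum a m y) ((q : ℝ) ^ m)) ^ 2 / (m * (q : ℝ) ^ m)) *
          (1 / (1 - y)) := by
        gcongr ?_ * (?_ ^ 2 / _) * _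
        · gcongr ?_ + _
          exact div_sub_one_le_div_sub_one hs hsy
        · exact ha.pow_le_two_mul_min hq hm hy₀ hy₁
    _ = 4 * (r ^ 2 / q / (r ^ 2 / q - 1) + 2) *
          min (saddleSum a m y) ((q : ℝ) ^ m) ^ 2 / (m * (q : ℝ) ^ m) * (1 / (1 - y)) := by ring

theorem exists_bounds_tailSum (ha : IsNecklaceCount q a) (hq : 2 ≤ q) {β : ℝ} (hβ : β < 2) :
    ∃ c C : ℝ, 0 < c ∧ 0 < C ∧ ∃ N : ℕ, ∀ n : ℕ, N ≤ n → ∀ m : ℕ, m ≤ β * log n / log q →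
      ∀ y : ℝ, 0 ≤ y → y < 1 → saddleSum a m y = n →
        c * min (n : ℝ) ((q : ℝ) ^ m) ^ 2 / (m * (q : ℝ) ^ m) ≤ tailSum a m y ∧
          tailSum a m y ≤
            C * min (n : ℝ) ((q : ℝ) ^ m) ^ 2 / (m * (q : ℝ) ^ m) * (1 / (1 - y)) := by
  have hq₁ : (1 : ℝ) < q := by exact_mod_cast hq
  obtain ⟨t, ht_half, ht₁, htβ⟩ := exists_exponent hβ
  set r : ℝ := (q : ℝ) ^ t
  have hr : 1 < r := one_lt_rpow hq₁ (by linarith)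
  have hqr : (q : ℝ) < r ^ 2 := by
    rw [← rpow_mul_natCast (by positivity)]
    exact self_lt_rpow_of_one_lt hq₁ (by push_cast; linarith)
  have := sub_pos.2 hr
  have := sub_pos.2 ((one_lt_div (by positivity)).2 hqr)
  obtain ⟨N, hN⟩ := Filter.eventually_atTop.1
    ((ha.eventually_rpow_le_mul_of_saddleSum_eq hq (by linarith) ht₁ htβ).and
      (Filter.eventually_ne_atTop 0))
  refine ⟨1 / (16 * (r / (r - 1)) ^ 4), 4 * (r ^ 2 / q / (r ^ 2 / q - 1) + 2), by positivity,
    by positivity, N, fun n hn m hm y hy₀ hy₁ hsaddle ↦ ?_⟩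
  obtain ⟨hry, hn₀⟩ : r ≤ q * y ∧ n ≠ 0 := (hN n hn).imp_left fun h ↦ h m hm y hy₀ hsaddle
  have hm₀ : m ≠ 0 := by
    rintro rfl
    exact hn₀ (Nat.cast_eq_zero.1 (hsaddle.symm.trans (by simp [saddleSum])))
  rw [← hsaddle]
  exact ⟨ha.mul_sq_min_div_le_tailSum hq hm₀ hy₀ hy₁ hr hry,
    ha.tailSum_le_mul_sq_min_div hq hm₀ hy₀ hy₁ (by linarith) hqr hry⟩

end IsNecklaceCount

/-! ### Monic irreducible polynomials over a finite field -/

section MonicIrreducibles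

open Polynomial UniqueFactorizationMonoid

/-- The monic irreducible polynomials of degree `d`, the primes of degree `d` of `F[X]`. -/
def monicIrreducibles (F : Type*) [Field F] (d : ℕ) : Set F[X] :=
  {p | p.Monic ∧ Irreducible p ∧ p.natDegree = d}

/-- The number of monic irreducible polynomials of degree `d`, meaningful for finite `F`: `ncard`
sends an infinite set to `0`. -/
noncomputable def irrCount (F : Type*) [Field F] (d : ℕ) : ℕ :=
  (monicIrreducibles F d).ncard

theorem natDegree_eq_sum_normalizedFactors {F : Type*} [Field F] [DecidableEq F] {P : F[X]}
    (hP : P ≠ 0) : P.natDegree = ((normalizedFactors P).map natDegree).sum := by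
  rw [← natDegree_multiset_prod _ (zero_notMem_normalizedFactors P)]
  exact (natDegree_eq_of_degree_eq
    (degree_eq_degree_of_associated (prod_normalizedFactors hP))).symm

section FiniteField

variable {F : Type*} [Field F] [Fintype F]

theorem X_pow_card_pow_sub_X_separable {n : ℕ} (hn : n ≠ 0) :
    (X ^ Fintype.card F ^ n - X : F[X]).Separable := by
  obtain ⟨p, hp⟩ := CharP.exists F
  refine galois_poly_separable p _ (dvd_pow ?_ hn)
  rw [← CharP.cast_eq_zero_iff F p]
  exact FiniteField.cast_card_eq_zero F

theorem mem_normalizedFactors_X_pow_card_pow_sub_X [DecidableEq F] {n : ℕ} (hn : n ≠ 0) {p : F[X]} :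
    p ∈ normalizedFactors (X ^ Fintype.card F ^ n - X) ↔
      p.Monic ∧ Irreducible p ∧ p.natDegree ∣ n := by
  have dvd_iff (hp : Irreducible p) : p.natDegree ∣ n ↔ p ∣ X ^ Fintype.card F ^ n - X := by
    rw [hp.natDegree_dvd_iff_dvd_X_pow_card_pow_sub_X, Nat.card_eq_fintype_card]
  rw [mem_normalizedFactors_iff'
    (FiniteField.X_pow_card_pow_sub_X_ne_zero F hn Fintype.one_lt_card)]
  constructor
  · rintro ⟨hp, hnorm, hdvd⟩
    exact ⟨hnorm ▸ monic_normalize hp.ne_zero, hp, (dvd_iff hp).2 hdvd⟩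
  · rintro ⟨hmonic, hp, hdvd⟩
    exact ⟨hp, hmonic.normalize_eq_self, (dvd_iff hp).1 hdvd⟩

theorem finite_monicIrreducibles (F : Type*) [Field F] [Finite F] (d : ℕ) :
    (monicIrreducibles F d).Finite := by
  classical
  have := Fintype.ofFinite F
  rcases eq_or_ne d 0 with rfl | hd
  · exact Set.finite_empty.subset fun p ⟨_, hp, hdeg⟩ ↦ hp.natDegree_pos.ne' hdeg
  · refine (normalizedFactors (X ^ Fintype.card F ^ d - X : F[X])).toFinset.finite_toSet.subset ?_
    rintro p ⟨hmonic, hp, hdeg⟩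
    rw [Finset.mem_coe, Multiset.mem_toFinset, mem_normalizedFactors_X_pow_card_pow_sub_X hd]
    exact ⟨hmonic, hp, hdeg.dvd⟩

theorem isNecklaceCount_irrCount (F : Type*) [Field F] [Fintype F] :
    IsNecklaceCount (Fintype.card F) (irrCount F) := by
  classical
  intro n hn
  set P : F[X] := X ^ Fintype.card F ^ n - X
  have hP₀ : P ≠ 0 := FiniteField.X_pow_card_pow_sub_X_ne_zero F hn Fintype.one_lt_card
  have nodup : (normalizedFactors P).Nodup :=
    (squarefree_iff_nodup_normalizedFactors hP₀).1 (X_pow_card_pow_sub_X_separable hn).squarefree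
  have mem_factors (p : F[X]) : p ∈ (normalizedFactors P).toFinset ↔
      p.Monic ∧ Irreducible p ∧ p.natDegree ∣ n := by
    rw [Multiset.mem_toFinset, mem_normalizedFactors_X_pow_card_pow_sub_X hn]
  have fiber_eq {d : ℕ} (hd : d ∣ n) :
      (((normalizedFactors P).toFinset.filter (·.natDegree = d) : Finset F[X]) : Set F[X]) =
        monicIrreducibles F d := by
    ext p
    simp only [Finset.coe_filter, mem_factors, monicIrreducibles, Set.mem_ofPred_eq, and_assoc]
    refine and_congr_right fun _ ↦ and_congr_right fun _ ↦ and_iff_right_of_imp ?_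
    exact fun hdeg ↦ hdeg ▸ hd
  calc ∑ d ∈ n.divisors, d * irrCount F d
      = ∑ d ∈ n.divisors, ∑ p ∈ (normalizedFactors P).toFinset with p.natDegree = d,
          p.natDegree := by
        refine Finset.sum_congr rfl fun d hd ↦ ?_
        rw [Finset.sum_congr rfl fun p hp ↦ (Finset.mem_filter.1 hp).2, Finset.sum_const,
          smul_eq_mul, mul_comm, irrCount, ← fiber_eq (Nat.dvd_of_mem_divisors hd),
          Set.ncard_coe_finset]
    _ = ∑ p ∈ (normalizedFactors P).toFinset, p.natDegree :=
        Finset.sum_fiberwise_of_maps_to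
          (fun p hp ↦ Nat.mem_divisors.2 ⟨((mem_factors p).1 hp).2.2, hn⟩) _
    _ = P.natDegree := by
        rw [natDegree_eq_sum_normalizedFactors hP₀, Finset.sum, Multiset.toFinset_val, nodup.dedup]
    _ = Fintype.card F ^ n :=
        FiniteField.X_pow_card_pow_sub_X_natDegree_eq F hn Fintype.one_lt_card

end FiniteField

theorem mul_logDeriv_inv_one_sub_div_pow_pow {𝕜 : Type*} [NontriviallyNormedField 𝕜] (q x : 𝕜)
    (d k : ℕ) :
    x * logDeriv (fun z : 𝕜 ↦ ((1 - (z / q) ^ d)⁻¹) ^ k) x =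
      d * k * ((x / q) ^ d / (1 - (x / q) ^ d)) := by
  have hderiv : HasDerivAt (fun z : 𝕜 ↦ 1 - (z / q) ^ d)
      (-(d * (x / q) ^ (d - 1) * (1 / q))) x :=
    (((hasDerivAt_id x).div_const q).pow d).const_sub 1
  have eq_zpow : (fun z : 𝕜 ↦ ((1 - (z / q) ^ d)⁻¹) ^ k) =
      fun z ↦ (1 - (z / q) ^ d) ^ (-k : ℤ) := by
    simp only [inv_pow, zpow_neg, zpow_natCast]
  rw [eq_zpow, logDeriv_fun_zpow hderiv.differentiableAt, logDeriv_apply, hderiv.deriv]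
  rcases d with _ | d
  · simp
  · rw [Nat.add_sub_cancel, pow_succ (x / q) d]
    push_cast
    ring

section GeneratingFunction

variable (F : Type) [Field F] [Fintype F] (m : ℕ) {x : ℝ}

theorem FqFun_eq_prod (z : ℝ) :
    FqFun F m z =
      ∏ d ∈ Finset.Icc 1 m, ((1 - (z / Fintype.card F) ^ d)⁻¹) ^ irrCount F d := by
  have fibers : {p : F[X] | p.Monic ∧ Irreducible p ∧ p.natDegree ≤ m} =
      ⋃ d ∈ (Finset.Icc 1 m : Set ℕ), monicIrreducibles F d := by
    ext p
    simp only [monicIrreducibles, Set.mem_ofPred_eq, Set.mem_iUnion, Finset.coe_Icc, Set.mem_Icc,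
      exists_prop]
    constructor
    · rintro ⟨hmonic, hp, hdeg⟩
      exact ⟨p.natDegree, ⟨hp.natDegree_pos, hdeg⟩, hmonic, hp, rfl⟩
    · rintro ⟨d, ⟨_, hd⟩, hmonic, hp, rfl⟩
      exact ⟨hmonic, hp, hd⟩
  have disjoint : (Finset.Icc 1 m : Set ℕ).PairwiseDisjoint (monicIrreducibles F) :=
    fun d _ e _ hde ↦ Set.disjoint_left.2 fun p hd he ↦ hde (hd.2.2.symm.trans he.2.2)
  rw [FqFun, fibers, finprod_mem_biUnion disjoint (Finset.finite_toSet _)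
    fun d _ ↦ finite_monicIrreducibles F d, finprod_mem_coe_finset]
  refine Finset.prod_congr rfl fun d _ ↦ ?_
  rw [finprod_mem_congr rfl fun p hp ↦ by rw [hp.2.2],
    finprod_mem_eq_finite_toFinset_prod _ (finite_monicIrreducibles F d), Finset.prod_const,
    irrCount, Set.ncard_eq_toFinset_card _ (finite_monicIrreducibles F d)]

theorem mul_deriv_FqFun_div (hx₀ : 0 ≤ x) (hx₁ : x < Fintype.card F) :
    x * deriv (FqFun F m) x / FqFun F m x = saddleSum (irrCount F) m (x / Fintype.card F) := by
  have hy₀ : 0 ≤ x / Fintype.card F := by positivity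
  have hy₁ : x / Fintype.card F < 1 := (div_lt_one (hx₀.trans_lt hx₁)).2 hx₁
  have factor_ne {d : ℕ} (hd : d ∈ Finset.Icc 1 m) : 1 - (x / Fintype.card F) ^ d ≠ 0 :=
    (one_sub_pow_pos hy₀ hy₁ (ne_zero_of_mem_Icc_one hd)).ne'
  have logDeriv_eq : logDeriv (FqFun F m) x = ∑ d ∈ Finset.Icc 1 m,
      logDeriv (fun z : ℝ ↦ ((1 - (z / Fintype.card F) ^ d)⁻¹) ^ irrCount F d) x := by
    rw [funext (FqFun_eq_prod F m)]
    refine logDeriv_prod (fun d hd ↦ pow_ne_zero _ (inv_ne_zero (factor_ne hd))) fun d hd ↦ ?_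
    have := factor_ne hd
    fun_prop (disch := assumption)
  rw [mul_div_assoc, ← logDeriv_apply, logDeriv_eq, Finset.mul_sum]
  exact Finset.sum_congr rfl fun d _ ↦ mul_logDeriv_inv_one_sub_div_pow_pow _ x d _

theorem log_Gq_eq_tailSum (hx₀ : 0 ≤ x) (hx₁ : x < Fintype.card F) :
    log (Gq F m x) = tailSum (irrCount F) m (x / Fintype.card F) := by
  have hq : (0 : ℝ) < Fintype.card F := hx₀.trans_lt hx₁
  have factor_pos {d : ℕ} (hd : d ∈ Finset.Icc 1 m) :
      0 < ((1 - (x / Fintype.card F) ^ d)⁻¹) ^ irrCount F d :=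
    pow_pos (inv_pos.2 (one_sub_pow_pos (by positivity) ((div_lt_one hq).2 hx₁)
      (ne_zero_of_mem_Icc_one hd))) _
  have gauss := (isNecklaceCount_irrCount F).sum_pow_div m (x / Fintype.card F)
  rw [mul_div_cancel₀ _ hq.ne'] at gauss
  rw [Gq, FqFun_eq_prod, log_mul (Finset.prod_pos fun d hd ↦ factor_pos hd).ne' (exp_ne_zero _),
    log_exp, log_prod fun d hd ↦ (factor_pos hd).ne', gauss, ← sub_eq_add_neg,
    ← Finset.sum_sub_distrib]
  refine Finset.sum_congr rfl fun d _ ↦ ?_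
  rw [log_pow, log_inv, logTail]
  ring

end GeneratingFunction

end MonicIrreducibles

theorem stmt15_general (F : Type) [Field F] [Fintype F] (ε : ℝ) (hε : 0 < ε) :
    ∃ c C : ℝ, 0 < c ∧ 0 < C ∧ ∃ N : ℕ, ∀ n : ℕ, N ≤ n → ∀ m : ℕ,
      (m : ℝ) ≤ (2 - ε) * log n / log (Fintype.card F) →
      ∀ xq : ℝ, 0 < xq → xq < (Fintype.card F : ℝ) →
      xq * deriv (FqFun F m) xq / FqFun F m xq = (n : ℝ) →
      c * (min (n : ℝ) ((Fintype.card F : ℝ) ^ m)) ^ 2 /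
          ((m : ℝ) * (Fintype.card F : ℝ) ^ m) ≤ log (Gq F m xq) ∧
        log (Gq F m xq) ≤
          C * (min (n : ℝ) ((Fintype.card F : ℝ) ^ m)) ^ 2 /
            ((m : ℝ) * (Fintype.card F : ℝ) ^ m) *
            (1 / (1 - xq / (Fintype.card F : ℝ))) := by
  obtain ⟨c, C, hc, hC, N, bounds⟩ := (isNecklaceCount_irrCount F).exists_bounds_tailSum
    Fintype.one_lt_card (sub_lt_self 2 hε)
  refine ⟨c, C, hc, hC, N, fun n hn m hm x hx₀ hx₁ hsaddle ↦ ?_⟩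
  rw [mul_deriv_FqFun_div F m hx₀.le hx₁] at hsaddle
  rw [log_Gq_eq_tailSum F m hx₀.le hx₁]
  exact bounds n hn m hm _ (by positivity) ((div_lt_one (hx₀.trans hx₁)).2 hx₁) hsaddle

/-- Fix a prime power `q` (the cardinality of a finite field `F`) and
`ε ∈ (0,1/2)`. There exist `c, C > 0` and `N` such that for all `n ≥ N` and
`(3/4)·log_q n ≤ m ≤ (2−ε)·log_q n`, one has
`c·(min{n,q^m})²/(m·q^m) ≤ log G_q(x_q) ≤ C·(min{n,q^m})²/(m·q^m)·1/(1 − x_q/q)`. -/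
theorem stmt15 :
    ∀ (F : Type) [Field F] [Fintype F], ∀ ε : ℝ, 0 < ε → ε < 1 / 2 →
      ∃ c C : ℝ, 0 < c ∧ 0 < C ∧ ∃ N : ℕ, ∀ n : ℕ, N ≤ n → ∀ m : ℕ,
      (3 / 4) * Real.log n / Real.log (Fintype.card F) ≤ (m : ℝ) →
      (m : ℝ) ≤ (2 - ε) * Real.log n / Real.log (Fintype.card F) →
      ∀ xq : ℝ, 0 < xq → xq < (Fintype.card F : ℝ) →
      xq * deriv (FqFun F m) xq / FqFun F m xq = (n : ℝ) →
      c * (min (n : ℝ) ((Fintype.card F : ℝ) ^ m)) ^ 2 /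
          ((m : ℝ) * (Fintype.card F : ℝ) ^ m) ≤ Real.log (Gq F m xq) ∧
        Real.log (Gq F m xq) ≤
          C * (min (n : ℝ) ((Fintype.card F : ℝ) ^ m)) ^ 2 /
            ((m : ℝ) * (Fintype.card F : ℝ) ^ m) *
            (1 / (1 - xq / (Fintype.card F : ℝ))) := by
  intro F _ _ ε hε _
  obtain ⟨c, C, hc, hC, N, h⟩ := stmt15_general F ε hε
  exact ⟨c, C, hc, hC, N, fun n hn m _ hm ↦ h n hn m hm⟩
end

section
/- There exist absolute constants c, C > 0 such that for all integers n ≥ m ≥ 1, writing u = n/m, the saddle point x satisfies x ≥ c·n^{1/m}, the quantity λ = ∑_{i=1}^{m} i·x^i satisfies c·n·m ≤ λ ≤ n·m, and moreover | λ/(n·m) − 1 | ≤ C / max{ log u, n^{1/m} }. -/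
open Real

/-!
Since `n ≥ m` forces `x ≥ 1`, the weights `x ^ i` increase with `i`, and Chebyshev's sum inequality
gives `λ ≥ n * m / 2`. The gap `n * m - λ = ∑ (m - i) * x ^ i` is the sum over `k < m` of the
geometric sums `x + ⋯ + x ^ k`, so that `(x - 1) * (n * m - λ) = n - m * x ≤ n`: the relative error
`1 - λ / (n * m)` is at most `1 / (m * (x - 1))`. Finally `n ≤ m * x ^ m` bounds both `log u` by
`m * (x - 1)` and `n ^ (1 / m)` by `2 * x = 2 * (x - 1) + 2`, so the relative error times either of
them is bounded.
-/

section PowerSums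

open Finset

variable {R : Type*}

theorem sum_Icc_natCast_mul_two [CommSemiring R] (m : ℕ) :
    (∑ i ∈ Icc 1 m, (i : R)) * 2 = m * (m + 1) := by
  induction m with
  | zero => simp
  | succ k ih =>
    rw [sum_Icc_succ_top (Nat.le_add_left 1 k)]
    push_cast
    rw [add_mul, ih]
    ring

theorem sub_one_mul_mul_sum_pow_sub_sum_mul_pow [CommRing R] (x : R) (m : ℕ) :
    (x - 1) * ((∑ i ∈ Icc 1 m, x ^ i) * m - ∑ i ∈ Icc 1 m, i * x ^ i) =
      (∑ i ∈ Icc 1 m, x ^ i) - m * x := by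
  induction m with
  | zero => simp
  | succ k ih =>
    have geom : (∑ i ∈ Icc 1 k, x ^ i) * (x - 1) = x ^ (k + 1) - x := by
      simpa only [Ico_add_one_right_eq_Icc, pow_one] using geom_sum_Ico_mul x (Nat.le_add_left 1 k)
    rw [sum_Icc_succ_top (Nat.le_add_left 1 k), sum_Icc_succ_top (Nat.le_add_left 1 k)]
    push_cast
    linear_combination ih + geom

section OrderedSemiring

variable [CommSemiring R] [PartialOrder R] [IsOrderedRing R]

theorem sum_natCast_mul_le_sum_mul {f : ℕ → R} {m : ℕ} (hf : ∀ i ∈ Icc 1 m, 0 ≤ f i) :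
    ∑ i ∈ Icc 1 m, i * f i ≤ (∑ i ∈ Icc 1 m, f i) * m := by
  rw [mul_comm, mul_sum]
  gcongr with i hi
  · exact hf i hi
  · exact (mem_Icc.mp hi).2

theorem sum_pow_le_mul_pow {x : R} (hx : 1 ≤ x) (m : ℕ) : ∑ i ∈ Icc 1 m, x ^ i ≤ m * x ^ m := by
  simpa using sum_le_card_nsmul (Icc 1 m) (x ^ ·) (x ^ m)
    fun i hi ↦ pow_le_pow_right₀ hx (mem_Icc.mp hi).2

end OrderedSemiring

section StrictOrderedSemiring

variable [CommSemiring R] [LinearOrder R] [IsStrictOrderedRing R] {x : R} {m : ℕ}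

theorem sum_pow_pos (hx : 0 < x) (hm : 1 ≤ m) : 0 < ∑ i ∈ Icc 1 m, x ^ i :=
  sum_pos (fun i _ ↦ pow_pos hx i) (nonempty_Icc.mpr hm)

theorem one_le_of_le_sum_pow (hx : 0 ≤ x) (hm : 1 ≤ m) (h : m ≤ ∑ i ∈ Icc 1 m, x ^ i) :
    1 ≤ x := by
  contrapose! h
  have : ∑ i ∈ Icc 1 m, x ^ i < ∑ _i ∈ Icc 1 m, (1 : R) :=
    sum_lt_sum_of_nonempty (nonempty_Icc.mpr hm) fun i hi ↦
      pow_lt_one₀ hx h (Nat.one_le_iff_ne_zero.mp (mem_Icc.mp hi).1)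
  simpa using this

end StrictOrderedSemiring

section StrictOrderedRing

variable [CommRing R] [LinearOrder R] [IsStrictOrderedRing R]

theorem sum_mul_add_one_le_two_mul_sum_natCast_mul {f : ℕ → R} {m : ℕ}
    (hf : MonotoneOn f (Icc 1 m)) :
    (∑ i ∈ Icc 1 m, f i) * (m + 1) ≤ 2 * ∑ i ∈ Icc 1 m, i * f i := by
  obtain rfl | hm := m.eq_zero_or_pos
  · simp
  have chebyshev :
      (∑ i ∈ Icc 1 m, (i : R)) * ∑ i ∈ Icc 1 m, f i ≤ m * ∑ i ∈ Icc 1 m, i * f i := by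
    simpa using ((Nat.mono_cast (α := R)).monotoneOn _ |>.monovaryOn hf).sum_mul_sum_le_card_mul_sum
  refine le_of_mul_le_mul_left ?_ (Nat.cast_pos.mpr hm : (0 : R) < m)
  linear_combination 2 * chebyshev - (∑ i ∈ Icc 1 m, f i) * sum_Icc_natCast_mul_two (R := R) m

theorem sum_pow_mul_le_two_mul_sum_mul_pow {x : R} (hx : 1 ≤ x) (m : ℕ) :
    (∑ i ∈ Icc 1 m, x ^ i) * m ≤ 2 * ∑ i ∈ Icc 1 m, i * x ^ i := by
  have hx0 : 0 ≤ x := zero_le_one.trans hx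
  calc (∑ i ∈ Icc 1 m, x ^ i) * m ≤ (∑ i ∈ Icc 1 m, x ^ i) * (m + 1) :=
        mul_le_mul_of_nonneg_left (le_add_of_nonneg_right zero_le_one)
          (sum_nonneg fun i _ ↦ pow_nonneg hx0 i)
    _ ≤ 2 * ∑ i ∈ Icc 1 m, i * x ^ i :=
      sum_mul_add_one_le_two_mul_sum_natCast_mul ((pow_right_mono₀ hx).monotoneOn _)

end StrictOrderedRing

end PowerSums

section SaddlePoint

variable {x : ℝ} {m : ℕ}

theorem sum_pow_rpow_one_div_le_two_mul (hx : 1 ≤ x) (hm : 1 ≤ m) :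
    (∑ i ∈ Finset.Icc 1 m, x ^ i) ^ (1 / m : ℝ) ≤ 2 * x := by
  have hS : 0 ≤ ∑ i ∈ Finset.Icc 1 m, x ^ i := by positivity
  have hm0 : (0 : ℝ) < m := by positivity
  rw [one_div, rpow_inv_le_iff_of_pos hS (by positivity) hm0, rpow_natCast]
  calc ∑ i ∈ Finset.Icc 1 m, x ^ i ≤ m * x ^ m := sum_pow_le_mul_pow hx m
    _ ≤ 2 ^ m * x ^ m := by gcongr; exact_mod_cast Nat.lt_two_pow_self.le
    _ = (2 * x) ^ m := (mul_pow 2 x m).symm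

theorem log_sum_pow_div_le_mul_sub_one (hx : 1 ≤ x) (hm : 1 ≤ m) :
    log ((∑ i ∈ Finset.Icc 1 m, x ^ i) / m) ≤ m * (x - 1) := by
  have := sum_pow_pos (one_pos.trans_le hx) hm
  have hm0 : (0 : ℝ) < m := by positivity
  calc log ((∑ i ∈ Finset.Icc 1 m, x ^ i) / m) ≤ log (x ^ m) :=
        log_le_log (by positivity) ((div_le_iff₀' hm0).mpr (sum_pow_le_mul_pow hx m))
    _ = m * log x := log_pow x m
    _ ≤ m * (x - 1) := by gcongr; exact log_le_sub_one_of_pos (by positivity)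

/-- The relative error `1 - λ / (n * m)` of the approximation `λ ≈ n * m`, as a function of the
saddle point `x`: here `n` stands for `∑ i ∈ Finset.Icc 1 m, x ^ i`. -/
noncomputable def relError (x : ℝ) (m : ℕ) : ℝ :=
  1 - (∑ i ∈ Finset.Icc 1 m, i * x ^ i) / ((∑ i ∈ Finset.Icc 1 m, x ^ i) * m)

theorem relError_mul_eq_sub (hx : 0 < x) (hm : 1 ≤ m) :
    relError x m * ((∑ i ∈ Finset.Icc 1 m, x ^ i) * m) =
      (∑ i ∈ Finset.Icc 1 m, x ^ i) * m - ∑ i ∈ Finset.Icc 1 m, i * x ^ i := by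
  have := sum_pow_pos hx hm
  rw [relError, sub_mul, one_mul, div_mul_cancel₀ _ (by positivity)]

theorem relError_nonneg (hx : 0 ≤ x) : 0 ≤ relError x m :=
  sub_nonneg.mpr <| div_le_one_of_le₀ (sum_natCast_mul_le_sum_mul fun _ _ ↦ by positivity)
    (by positivity)

theorem relError_le_half (hx : 1 ≤ x) (hm : 1 ≤ m) : relError x m ≤ 1 / 2 := by
  have := sum_pow_pos (one_pos.trans_le hx) hm
  rw [relError, sub_le_comm, le_div_iff₀ (by positivity)]
  linarith [sum_pow_mul_le_two_mul_sum_mul_pow hx m]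

theorem relError_mul_mul_sub_one_le_one (hx : 1 ≤ x) (hm : 1 ≤ m) :
    relError x m * (m * (x - 1)) ≤ 1 := by
  have hS := sum_pow_pos (one_pos.trans_le hx) hm
  refine le_of_mul_le_mul_right ?_ hS
  calc relError x m * (m * (x - 1)) * ∑ i ∈ Finset.Icc 1 m, x ^ i
      = (x - 1) * (relError x m * ((∑ i ∈ Finset.Icc 1 m, x ^ i) * m)) := by ring
    _ = (∑ i ∈ Finset.Icc 1 m, x ^ i) - m * x := by
      rw [relError_mul_eq_sub (by positivity) hm, sub_one_mul_mul_sum_pow_sub_sum_mul_pow]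
    _ ≤ 1 * ∑ i ∈ Finset.Icc 1 m, x ^ i := by
      rw [one_mul]
      exact sub_le_self _ (by positivity)

theorem relError_mul_log_le_one (hx : 1 ≤ x) (hm : 1 ≤ m) :
    relError x m * log ((∑ i ∈ Finset.Icc 1 m, x ^ i) / m) ≤ 1 :=
  calc relError x m * log ((∑ i ∈ Finset.Icc 1 m, x ^ i) / m)
      ≤ relError x m * (m * (x - 1)) :=
        mul_le_mul_of_nonneg_left (log_sum_pow_div_le_mul_sub_one hx hm)
          (relError_nonneg (by positivity))
    _ ≤ 1 := relError_mul_mul_sub_one_le_one hx hm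

theorem relError_mul_rpow_le_three (hx : 1 ≤ x) (hm : 1 ≤ m) :
    relError x m * (∑ i ∈ Finset.Icc 1 m, x ^ i) ^ (1 / m : ℝ) ≤ 3 := by
  have hδ : 0 ≤ relError x m := relError_nonneg (by positivity)
  have : 0 ≤ x - 1 := sub_nonneg.mpr hx
  calc relError x m * (∑ i ∈ Finset.Icc 1 m, x ^ i) ^ (1 / m : ℝ)
      ≤ relError x m * (2 * x) := by gcongr; exact sum_pow_rpow_one_div_le_two_mul hx hm
    _ = 2 * (relError x m * (1 * (x - 1))) + 2 * relError x m := by ring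
    _ ≤ 2 * (relError x m * (m * (x - 1))) + 2 * relError x m := by
      gcongr
      exact_mod_cast hm
    _ ≤ 3 := by linarith [relError_mul_mul_sub_one_le_one hx hm, relError_le_half hx hm]

theorem relError_le_three_div_max (hx : 1 ≤ x) (hm : 1 ≤ m) :
    relError x m ≤ 3 / max (log ((∑ i ∈ Finset.Icc 1 m, x ^ i) / m))
      ((∑ i ∈ Finset.Icc 1 m, x ^ i) ^ (1 / m : ℝ)) := by
  have := sum_pow_pos (one_pos.trans_le hx) hm
  rw [le_div_iff₀ (lt_max_of_lt_right (by positivity)),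
    mul_max_of_nonneg _ _ (relError_nonneg (by positivity))]
  exact max_le ((relError_mul_log_le_one hx hm).trans (by norm_num))
    (relError_mul_rpow_le_three hx hm)

end SaddlePoint

theorem stmt16_general :
    ∃ c C : ℝ, 0 < c ∧ 0 < C ∧ ∀ (n : ℝ) (m : ℕ), 1 ≤ m → m ≤ n →
      ∀ x : ℝ, 0 < x → (∑ i ∈ Finset.Icc 1 m, x ^ i) = n →
      ∀ lam : ℝ, lam = ∑ i ∈ Finset.Icc 1 m, (i : ℝ) * x ^ i →
      ∀ u : ℝ, u = n / (m : ℝ) →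
      c * n ^ ((1 : ℝ) / (m : ℝ)) ≤ x ∧
        c * n * (m : ℝ) ≤ lam ∧ lam ≤ n * (m : ℝ) ∧
        |lam / (n * (m : ℝ)) - 1| ≤
          C / max (Real.log u) (n ^ ((1 : ℝ) / (m : ℝ))) := by
  refine ⟨1 / 2, 3, by norm_num, by norm_num, ?_⟩
  rintro _ m hm hmn x hx rfl _ rfl _ rfl
  have hx1 : 1 ≤ x := one_le_of_le_sum_pow hx.le hm hmn
  refine ⟨?_, ?_, sum_natCast_mul_le_sum_mul fun _ _ ↦ by positivity, ?_⟩
  · linarith [sum_pow_rpow_one_div_le_two_mul hx1 hm]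
  · linarith [sum_pow_mul_le_two_mul_sum_mul_pow hx1 m]
  · rw [abs_sub_comm, ← relError, abs_of_nonneg (relError_nonneg hx.le)]
    exact relError_le_three_div_max hx1 hm

/-- There exist absolute constants `c, C > 0` such that for all integers
`n ≥ m ≥ 1`, writing `u = n/m`, the saddle point `x` satisfies `x ≥ c·n^{1/m}`, the
quantity `λ = ∑_{i=1}^m i·x^i` satisfies `c·n·m ≤ λ ≤ n·m`, and moreover
`|λ/(n·m) − 1| ≤ C/max{log u, n^{1/m}}`. -/
theorem stmt16 :
    ∃ c C : ℝ, 0 < c ∧ 0 < C ∧ ∀ n m : ℕ, 1 ≤ m → m ≤ n →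
      ∀ x : ℝ, 0 < x → (∑ i ∈ Finset.Icc 1 m, x ^ i) = (n : ℝ) →
      ∀ lam : ℝ, lam = ∑ i ∈ Finset.Icc 1 m, (i : ℝ) * x ^ i →
      ∀ u : ℝ, u = (n : ℝ) / (m : ℝ) →
      c * (n : ℝ) ^ ((1 : ℝ) / (m : ℝ)) ≤ x ∧
        c * (n : ℝ) * (m : ℝ) ≤ lam ∧ lam ≤ (n : ℝ) * (m : ℝ) ∧
        |lam / ((n : ℝ) * (m : ℝ)) - 1| ≤
          C / max (Real.log u) ((n : ℝ) ^ ((1 : ℝ) / (m : ℝ))) := by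
  obtain ⟨c, C, hc, hC, h⟩ := stmt16_general
  exact ⟨c, C, hc, hC, fun n m hm hmn ↦ h n m hm (mod_cast hmn)⟩
end

section
/- There exists an absolute constant C > 0 such that for every integer m ≥ 1 and every real u > 1 with ξ(u) ≤ π·m, one has | T(ξ(u)) − (u−1)·ξ(u)/(2m) | ≤ C·u·(log(u+1))²/m², where T(s) = ∫₀^{s} ((e^{t} − 1)/t) · ( (t/m)/(1 − e^{−t/m}) − 1 ) dt. -/
open Real

open MeasureTheory

/-!
Writing `y = w / 2`, one has `w / (1 - e⁻ʷ) = y + y coth y`, and `0 ≤ y coth y - 1 ≤ y² / 3`.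
With `w = t / m` the integrand of `T` is therefore `(eᵗ - 1) / (2m)` up to an error of at most
`t (eᵗ - 1) / (12m²)`. Integrating, `T(s) = (eˢ - 1 - s) / (2m) + O(s (eˢ - 1 - s) / m²)`, and at
`s = ξ(u)` the equation `eˢ = 1 + us` turns `eˢ - 1 - s` into `(u - 1) s`. Finally `ξ(u) ≤ 2 log u`,
because `us = eˢ - 1 = 2 e^{s/2} sinh (s/2) ≥ s e^{s/2}`.
-/

lemma le_of_hasDerivAt_nonneg {f f' : ℝ → ℝ} {a b : ℝ} (hab : a ≤ b)
    (hf : ∀ x ∈ Set.Icc a b, HasDerivAt f (f' x) x) (hf' : ∀ x ∈ Set.Icc a b, 0 ≤ f' x) :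
    f a ≤ f b :=
  monotoneOn_of_hasDerivWithinAt_nonneg (convex_Icc a b)
    (fun x hx ↦ (hf x hx).continuousAt.continuousWithinAt)
    (fun x hx ↦ (hf x (interior_subset hx)).hasDerivWithinAt)
    (fun x hx ↦ hf' x (interior_subset hx))
    (Set.left_mem_Icc.2 hab) (Set.right_mem_Icc.2 hab) hab

lemma sinh_le_mul_cosh {y : ℝ} (hy : 0 ≤ y) : sinh y ≤ y * cosh y := by
  have hderiv (x : ℝ) : HasDerivAt (fun x ↦ x * cosh x - sinh x) (x * sinh x) x :=
    (((hasDerivAt_id x).mul (hasDerivAt_cosh x)).sub (hasDerivAt_sinh x)).congr_deriv (by simp)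
  have hle := le_of_hasDerivAt_nonneg hy (fun x _ ↦ hderiv x)
    fun x hx ↦ mul_nonneg hx.1 (sinh_nonneg_iff.2 hx.1)
  simpa using hle

lemma mul_cosh_le_one_add_sq_div_mul_sinh {y : ℝ} (hy : 0 ≤ y) :
    y * cosh y ≤ (1 + y ^ 2 / 3) * sinh y := by
  have hderiv (x : ℝ) : HasDerivAt (fun x ↦ (1 + x ^ 2 / 3) * sinh x - x * cosh x)
      (x / 3 * (x * cosh x - sinh x)) x :=
    (((((hasDerivAt_pow 2 x).div_const 3).const_add 1).mul (hasDerivAt_sinh x)).sub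
      ((hasDerivAt_id x).mul (hasDerivAt_cosh x))).congr_deriv (by
        simp only [Nat.cast_ofNat, Nat.add_one_sub_one, pow_one, one_mul, id_eq]
        ring)
  have hle := le_of_hasDerivAt_nonneg hy (fun x _ ↦ hderiv x)
    fun x hx ↦ mul_nonneg (div_nonneg hx.1 zero_le_three)
      (sub_nonneg.2 (sinh_le_mul_cosh hx.1))
  simpa using hle

lemma exp_sub_one_eq_mul_sinh (x : ℝ) : exp x - 1 = 2 * exp (x / 2) * sinh (x / 2) := by
  have hsq : exp (x / 2) * exp (x / 2) = exp x := by rw [← exp_add, add_halves]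
  have hinv : exp (x / 2) * exp (-(x / 2)) = 1 := by rw [← exp_add, add_neg_cancel, exp_zero]
  rw [sinh_eq]
  linear_combination hinv - hsq

lemma div_one_sub_exp_neg_eq {w : ℝ} (hw : w ≠ 0) :
    w / (1 - exp (-w)) = w / 2 + w / 2 * cosh (w / 2) / sinh (w / 2) := by
  have hsinh : sinh (w / 2) ≠ 0 := sinh_ne_zero.2 (by positivity)
  have hden : 1 - exp (-w) = 2 * sinh (w / 2) / exp (w / 2) := by
    have h := exp_sub_one_eq_mul_sinh (-w)
    rw [neg_div, sinh_neg, exp_neg (w / 2)] at h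
    rw [div_eq_mul_inv]
    linear_combination -h
  rw [hden, ← cosh_add_sinh]
  field_simp
  ring

lemma abs_div_one_sub_exp_neg_sub_le {w : ℝ} (hw : 0 < w) :
    |w / (1 - exp (-w)) - 1 - w / 2| ≤ w ^ 2 / 12 := by
  have hsinh : 0 < sinh (w / 2) := sinh_pos_iff.2 (by positivity)
  have hlower : 1 ≤ w / 2 * cosh (w / 2) / sinh (w / 2) :=
    (one_le_div hsinh).2 (sinh_le_mul_cosh (by positivity))
  have hupper : w / 2 * cosh (w / 2) / sinh (w / 2) ≤ 1 + (w / 2) ^ 2 / 3 :=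
    (div_le_iff₀ hsinh).2 (mul_cosh_le_one_add_sq_div_mul_sinh (by positivity))
  rw [div_one_sub_exp_neg_eq hw.ne', abs_le]
  constructor <;> linarith [sq_nonneg w]

lemma norm_intervalIntegral_sub_le_of_norm_sub_le {E : Type*} [NormedAddCommGroup E]
    [NormedSpace ℝ E] {μ : Measure ℝ} {a b : ℝ} {f g : ℝ → E} {h : ℝ → ℝ} (hab : a ≤ b)
    (hf : AEStronglyMeasurable f (μ.restrict (Set.Ioc a b))) (hg : IntervalIntegrable g μ a b)
    (hh : IntervalIntegrable h μ a b) (hfg : ∀ t ∈ Set.Ioc a b, ‖f t - g t‖ ≤ h t) :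
    ‖(∫ t in a..b, f t ∂μ) - ∫ t in a..b, g t ∂μ‖ ≤ ∫ t in a..b, h t ∂μ := by
  have hsub : IntervalIntegrable (fun t ↦ f t - g t) μ a b := by
    rw [intervalIntegrable_iff_integrableOn_Ioc_of_le hab] at hg hh ⊢
    exact hh.mono' (hf.sub hg.aestronglyMeasurable)
      (ae_restrict_of_forall_mem measurableSet_Ioc hfg)
  have hf' : IntervalIntegrable f μ a b := by simpa using hsub.add hg
  rw [← intervalIntegral.integral_sub hf' hg]
  exact intervalIntegral.norm_integral_le_of_norm_le hab (.of_forall hfg) hh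

/-- The integrand of `T`, with the integer `m` replaced by a real scale `a`. At `t = 0`, Lean's
`0 / 0 = 0` makes its value `0`, which is its limit there. -/
noncomputable def TfunIntegrand (a t : ℝ) : ℝ :=
  (exp t - 1) / t * (t / a / (1 - exp (-(t / a))) - 1)

lemma Tfun_eq_integral (m : ℕ) (s : ℝ) : Tfun m s = ∫ t in (0 : ℝ)..s, TfunIntegrand m t := by
  refine intervalIntegral.integral_congr fun t _ ↦ ?_
  rcases eq_or_ne t 0 with rfl | ht
  · simp [TfunIntegrand]
  · simp only [TfunIntegrand, if_neg ht, neg_div]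

lemma abs_TfunIntegrand_sub_le {a t : ℝ} (ha : 0 < a) (ht : 0 < t) :
    |TfunIntegrand a t - (exp t - 1) / (2 * a)| ≤ t * (exp t - 1) / (12 * a ^ 2) := by
  have hexp : 0 < exp t - 1 := sub_pos.2 (one_lt_exp_iff.2 ht)
  calc |TfunIntegrand a t - (exp t - 1) / (2 * a)|
      = |(exp t - 1) / t * (t / a / (1 - exp (-(t / a))) - 1 - t / a / 2)| := by
        congr 1
        rw [TfunIntegrand]
        field_simp
    _ = (exp t - 1) / t * |t / a / (1 - exp (-(t / a))) - 1 - t / a / 2| := by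
        rw [abs_mul, abs_of_pos (by positivity)]
    _ ≤ (exp t - 1) / t * ((t / a) ^ 2 / 12) := by
        gcongr
        exact abs_div_one_sub_exp_neg_sub_le (by positivity)
    _ = t * (exp t - 1) / (12 * a ^ 2) := by field_simp

lemma integral_exp_sub_one (s : ℝ) : ∫ t in (0 : ℝ)..s, (exp t - 1) = exp s - 1 - s := by
  rw [intervalIntegral.integral_sub (by simp) (by simp)]
  simp

lemma abs_integral_TfunIntegrand_sub_le {a s : ℝ} (ha : 0 < a) (hs : 0 ≤ s) :
    |(∫ t in (0 : ℝ)..s, TfunIntegrand a t) - (exp s - 1 - s) / (2 * a)| ≤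
      s * (exp s - 1 - s) / (12 * a ^ 2) := by
  have hmeas : Measurable (TfunIntegrand a) := by
    unfold TfunIntegrand
    fun_prop
  have hbound (t : ℝ) (ht : t ∈ Set.Ioc 0 s) :
      ‖TfunIntegrand a t - (exp t - 1) / (2 * a)‖ ≤ s / (12 * a ^ 2) * (exp t - 1) := by
    have hexp : 0 ≤ exp t - 1 := sub_nonneg.2 (one_le_exp ht.1.le)
    calc |TfunIntegrand a t - (exp t - 1) / (2 * a)|
        ≤ t * (exp t - 1) / (12 * a ^ 2) := abs_TfunIntegrand_sub_le ha ht.1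
      _ = t / (12 * a ^ 2) * (exp t - 1) := by ring
      _ ≤ s / (12 * a ^ 2) * (exp t - 1) := by
          gcongr
          exact ht.2
  have hint := norm_intervalIntegral_sub_le_of_norm_sub_le (μ := volume) hs
    hmeas.aestronglyMeasurable (Continuous.intervalIntegrable (by fun_prop) 0 s)
    (Continuous.intervalIntegrable (by fun_prop) 0 s) hbound
  rw [intervalIntegral.integral_div, intervalIntegral.integral_const_mul, integral_exp_sub_one]
    at hint
  rwa [mul_div_right_comm]

lemma exists_pos_exp_eq_one_add_mul {u : ℝ} (hu : 1 < u) :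
    ∃ x : ℝ, 0 < x ∧ exp x = 1 + u * x := by
  have hu₀ : 0 < u := one_pos.trans hu
  have hlog : 0 < log u := log_pos hu
  have hleft : exp (log u) - u * log u ≤ 1 := by
    have h := mul_le_mul_of_nonneg_left (one_sub_inv_le_log_of_pos hu₀) hu₀.le
    rw [mul_sub, mul_inv_cancel₀ hu₀.ne'] at h
    rw [exp_log hu₀]
    linarith
  have hright : 1 ≤ exp (2 * log u) - u * (2 * log u) := by
    have h := exp_sub_one_eq_mul_sinh (2 * log u)
    rw [mul_div_cancel_left₀ _ two_ne_zero, exp_log hu₀] at h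
    have hsinh := mul_le_mul_of_nonneg_left (self_le_sinh_iff.2 hlog.le) hu₀.le
    linarith
  obtain ⟨x, hx, hroot⟩ := intermediate_value_Icc (f := fun x ↦ exp x - u * x)
    (by linarith : log u ≤ 2 * log u) (by fun_prop) ⟨hleft, hright⟩
  exact ⟨x, hlog.trans_le hx.1, sub_eq_iff_eq_add.1 hroot⟩

lemma le_two_mul_log_of_exp_eq_one_add_mul {u x : ℝ} (hx : 0 < x) (h : exp x = 1 + u * x) :
    x ≤ 2 * log u := by
  have hsinh : x / 2 ≤ sinh (x / 2) := self_le_sinh_iff.2 (by positivity)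
  have hexp : exp (x / 2) ≤ u := by
    refine le_of_mul_le_mul_right ?_ hx
    calc exp (x / 2) * x = 2 * exp (x / 2) * (x / 2) := by ring
      _ ≤ 2 * exp (x / 2) * sinh (x / 2) := by gcongr
      _ = u * x := by rw [← exp_sub_one_eq_mul_sinh, h, add_sub_cancel_left]
  linarith [(le_log_iff_exp_le ((exp_pos _).trans_le hexp)).2 hexp]

lemma xi_pos_and_exp_xi {u : ℝ} (hu : 1 < u) : 0 < xi u ∧ exp (xi u) = 1 + u * xi u := by
  have h := exists_pos_exp_eq_one_add_mul hu
  rw [xi, dif_pos h]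
  exact h.choose_spec

theorem stmt19_general {m : ℕ} (hm : 1 ≤ m) {u : ℝ} (hu : 1 < u) :
    |Tfun m (xi u) - (u - 1) * xi u / (2 * (m : ℝ))| ≤
      1 / 3 * (u - 1) * log u ^ 2 / (m : ℝ) ^ 2 := by
  have hm₀ : (0 : ℝ) < m := Nat.cast_pos.2 hm
  have : 0 ≤ u - 1 := sub_nonneg.2 hu.le
  obtain ⟨hxi, hexp⟩ := xi_pos_and_exp_xi hu
  have hmain : exp (xi u) - 1 - xi u = (u - 1) * xi u := by linear_combination hexp
  calc |Tfun m (xi u) - (u - 1) * xi u / (2 * (m : ℝ))|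
      ≤ xi u * ((u - 1) * xi u) / (12 * (m : ℝ) ^ 2) := by
        rw [Tfun_eq_integral, ← hmain]
        exact abs_integral_TfunIntegrand_sub_le hm₀ hxi.le
    _ = (u - 1) * xi u ^ 2 / (12 * (m : ℝ) ^ 2) := by ring
    _ ≤ (u - 1) * (2 * log u) ^ 2 / (12 * (m : ℝ) ^ 2) := by
        gcongr
        exact le_two_mul_log_of_exp_eq_one_add_mul hxi hexp
    _ = 1 / 3 * (u - 1) * log u ^ 2 / (m : ℝ) ^ 2 := by ring

/-- There exists an absolute constant `C > 0` such that for every integer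
`m ≥ 1` and every real `u > 1` with `ξ(u) ≤ π·m`, one has
`|T(ξ(u)) − (u−1)·ξ(u)/(2m)| ≤ C·u·(log(u+1))²/m²`. -/
theorem stmt19 :
    ∃ C : ℝ, 0 < C ∧ ∀ m : ℕ, 1 ≤ m → ∀ u : ℝ, 1 < u → xi u ≤ Real.pi * (m : ℝ) →
      |Tfun m (xi u) - (u - 1) * xi u / (2 * (m : ℝ))| ≤
        C * u * (Real.log (u + 1)) ^ 2 / (m : ℝ) ^ 2 := by
  refine ⟨1 / 3, by norm_num, fun m hm u hu _ ↦ (stmt19_general hm hu).trans ?_⟩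
  have := log_pos hu
  gcongr <;> linarith
end
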